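/- Let N ≥ 1 be an integer, λ₂ ∈ (0,1), λ ≥ max(1, L²) with L > 0, β ≥ 0, and d ≥ 1. For s ≥ 1 set q(s) = ⌈log(2Ns)/√(2·log(1/λ₂))⌉. Let x_1, …, x_S ∈ ℝ^d with ‖x_s‖₂ ≤ L, define V_0 = λI and V_s = V_{s-1} + x_s x_sᵀ, and let ρ_1, …, ρ_S be nonnegative reals with ρ_s ≤ 2β·‖x_s‖_{V_{s-1}^{-1}} for every s. If S ≤ T, then the communication-weighted regret satisfies Σ_{s=1}^S (1 + q(s))·ρ_s ≤ (1 + ⌈log(2NT)/√(2·log(1/λ₂))⌉)·2β·√(2·S·d·log(1 + SL²/(dλ))). -/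

import Mathlib

open Matrix

/-- The weighted norm `‖x‖_V = √(xᵀ V x)` associated with a matrix `V`. -/
noncomputable def wNorm {d : ℕ} (V : Matrix (Fin d) (Fin d) ℝ) (x : Fin d → ℝ) : ℝ :=
  Real.sqrt (x ⬝ᵥ V.mulVec x)

/-- The Euclidean norm `‖x‖₂ = √(xᵀ x)` on `ℝ^d`. -/
noncomputable def eucNorm {d : ℕ} (x : Fin d → ℝ) : ℝ :=
  Real.sqrt (x ⬝ᵥ x)

/-!
If `V ≥ lam • 1` then `lam * ‖x‖²_{V⁻¹} ≤ ‖x‖²`, so `u s = ‖x s‖²_{(V (s - 1))⁻¹}` is at most `2`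
as soon as `L ^ 2 ≤ 2 * lam`, and then `u s ≤ 2 * log (1 + u s)`. By the matrix determinant lemma
`log (1 + u s)` is the increment of `log det V` at step `s`, so these logarithms telescope, and
concavity of the logarithm on the spectrum bounds `log det (V S)` by the trace of `V S`, which is
known. Cauchy–Schwarz turns the resulting bound on `∑ u s` into one on `∑ √(u s)`, hence on the
regret. Communication only multiplies each summand by `1 + q s ≤ 1 + q T`.
-/

theorem le_two_mul_log_one_add {u : ℝ} (hu : 0 ≤ u) (hu2 : u ≤ 2) :
    u ≤ 2 * Real.log (1 + u) :=
  calc u ≤ 2 * (2 * u / (u + 2)) := by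
        rw [← mul_div_assoc, le_div_iff₀ (by linarith)]
        nlinarith
    _ ≤ 2 * Real.log (1 + u) := by
        gcongr
        exact Real.le_log_one_add_of_nonneg hu

theorem monotone_log_natCast : Monotone fun n : ℕ => Real.log n := by
  intro m n hmn
  rcases m.eq_zero_or_pos with rfl | hm
  · simpa using Real.log_natCast_nonneg n
  · exact Real.log_le_log (mod_cast hm) (mod_cast hmn)

/-- The number `q(s)` of communication rounds following episode `s` of the protocol run by `N`
agents whose communication matrix has `lam2` as eigenvalue of second largest absolute value. -/
noncomputable def communicationLength (N : ℕ) (lam2 : ℝ) (s : ℕ) : ℕ :=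
  ⌈Real.log (2 * N * s) / Real.sqrt (2 * Real.log (1 / lam2))⌉₊

theorem communicationLength_mono (N : ℕ) (lam2 : ℝ) : Monotone (communicationLength N lam2) := by
  intro s t hst
  have hlog : Real.log (2 * N * s) ≤ Real.log (2 * N * t) := by
    exact_mod_cast monotone_log_natCast (Nat.mul_le_mul_left (2 * N) hst)
  unfold communicationLength
  gcongr

section LoewnerOrder

open scoped MatrixOrder

variable {ι : Type*} [DecidableEq ι]

theorem posDef_of_smul_one_le {c : ℝ} (hc : 0 < c) {A : Matrix ι ι ℝ} (hA : c • 1 ≤ A) :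
    A.PosDef := by
  simpa using (PosDef.one.smul hc).add_posSemidef (Matrix.le_iff.mp hA)

variable [Fintype ι]

theorem det_add_vecMulVec {R : Type*} [CommRing R] {A : Matrix ι ι R} (hA : IsUnit A.det)
    (u v : ι → R) : (A + vecMulVec u v).det = A.det * (1 + v ⬝ᵥ A⁻¹ *ᵥ u) := by
  rw [vecMulVec_eq Unit, det_add_replicateCol_mul_replicateRow hA, Matrix.mul_assoc,
    ← replicateCol_mulVec, det_unique (n := Unit), Matrix.add_apply, one_apply_eq,
    replicateRow_mul_replicateCol_apply]

theorem mul_dotProduct_self_le_of_smul_one_le {c : ℝ} {A : Matrix ι ι ℝ} (hA : c • 1 ≤ A)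
    (y : ι → ℝ) : c * (y ⬝ᵥ y) ≤ y ⬝ᵥ A *ᵥ y := by
  simpa [sub_mulVec, smul_mulVec] using (Matrix.le_iff.mp hA).dotProduct_mulVec_nonneg y

theorem mul_dotProduct_inv_mulVec_le {c : ℝ} (hc : 0 < c) {A : Matrix ι ι ℝ} (hA : c • 1 ≤ A)
    (x : ι → ℝ) : c * (x ⬝ᵥ A⁻¹ *ᵥ x) ≤ x ⬝ᵥ x := by
  have hdet : IsUnit A.det := (posDef_of_smul_one_le hc hA).det_pos.ne'.isUnit
  set y := A⁻¹ *ᵥ x with hy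
  have hAy : A *ᵥ y = x := by rw [hy, mulVec_mulVec, mul_nonsing_inv _ hdet, one_mulVec]
  have hyy : c * (y ⬝ᵥ y) ≤ x ⬝ᵥ y := by
    simpa only [hAy, dotProduct_comm y x] using mul_dotProduct_self_le_of_smul_one_le hA y
  have hsq : 0 ≤ x ⬝ᵥ x - 2 * c * (x ⬝ᵥ y) + c * (c * (y ⬝ᵥ y)) :=
    calc 0 ≤ (x - c • y) ⬝ᵥ (x - c • y) := by simpa using dotProduct_star_self_nonneg (x - c • y)
      _ = _ := by
        simp only [sub_dotProduct, dotProduct_sub, smul_dotProduct, dotProduct_smul, smul_eq_mul,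
          dotProduct_comm y x]
        ring
  linarith [mul_le_mul_of_nonneg_left hyy hc.le]

theorem log_det_le_card_mul_log {A : Matrix ι ι ℝ} (hA : A.PosDef) {c : ℝ} (hc : 0 < c)
    (htr : A.trace ≤ Fintype.card ι * c) : Real.log A.det ≤ Fintype.card ι * Real.log c := by
  have hdet : A.det = ∏ i, hA.1.eigenvalues i := by simpa using hA.1.det_eq_prod_eigenvalues
  have htrace : A.trace = ∑ i, hA.1.eigenvalues i := by simpa using hA.1.trace_eq_sum_eigenvalues
  have htangent (i : ι) :
      Real.log (hA.1.eigenvalues i) ≤ hA.1.eigenvalues i / c - 1 + Real.log c := by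
    have hpos := hA.eigenvalues_pos i
    have hlog := Real.log_le_sub_one_of_pos (div_pos hpos hc)
    rw [Real.log_div hpos.ne' hc.ne'] at hlog
    linarith
  calc Real.log A.det = ∑ i, Real.log (hA.1.eigenvalues i) := by
        rw [hdet, Real.log_prod fun i _ => (hA.eigenvalues_pos i).ne']
    _ ≤ ∑ i, (hA.1.eigenvalues i / c - 1 + Real.log c) := Finset.sum_le_sum fun i _ => htangent i
    _ = A.trace / c - Fintype.card ι + Fintype.card ι * Real.log c := by
        simp [Finset.sum_add_distrib, ← Finset.sum_div, htrace]
    _ ≤ Fintype.card ι * Real.log c := by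
        linarith [(div_le_iff₀ hc).mpr htr]

end LoewnerOrder

section DesignMatrix

open scoped MatrixOrder

variable {ι : Type*} [DecidableEq ι]

/-- The regularized design matrix `V_n = lam • 1 + ∑_{s = 1}^n x_s x_sᵀ` of the actions
`x_1, …, x_n`, which are numbered from `1` as in the paper. -/
def designMatrix (lam : ℝ) (x : ℕ → ι → ℝ) (n : ℕ) : Matrix ι ι ℝ :=
  lam • 1 + ∑ s ∈ Finset.Icc 1 n, vecMulVec (x s) (x s)

variable {lam : ℝ} {x : ℕ → ι → ℝ}

theorem designMatrix_zero : designMatrix lam x 0 = lam • 1 := by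
  simp [designMatrix]

theorem designMatrix_succ (n : ℕ) :
    designMatrix lam x (n + 1) = designMatrix lam x n + vecMulVec (x (n + 1)) (x (n + 1)) := by
  rw [designMatrix, Finset.sum_Icc_succ_top (by lia), ← add_assoc, designMatrix]

theorem eq_designMatrix {V : ℕ → Matrix ι ι ℝ} (hzero : V 0 = lam • 1)
    (hsucc : ∀ n, V (n + 1) = V n + vecMulVec (x (n + 1)) (x (n + 1))) :
    V = designMatrix lam x := by
  funext n
  induction n with
  | zero => rw [hzero, designMatrix_zero]
  | succ n ih => rw [hsucc, ih, designMatrix_succ]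

theorem smul_one_le_designMatrix [Finite ι] (n : ℕ) : lam • 1 ≤ designMatrix lam x n :=
  le_add_of_nonneg_right <| Finset.sum_nonneg fun s _ => by
    simpa using (posSemidef_vecMulVec_self_star (x s)).nonneg

theorem posDef_designMatrix [Finite ι] (hlam : 0 < lam) (n : ℕ) : (designMatrix lam x n).PosDef :=
  posDef_of_smul_one_le hlam (smul_one_le_designMatrix n)

variable [Fintype ι]

theorem trace_designMatrix (n : ℕ) :
    (designMatrix lam x n).trace =
      Fintype.card ι * lam + ∑ s ∈ Finset.Icc 1 n, x s ⬝ᵥ x s := by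
  simp [designMatrix, trace_sum, trace_vecMulVec, mul_comm]

theorem dotProduct_inv_designMatrix_nonneg (hlam : 0 < lam) (n : ℕ) (y : ι → ℝ) :
    0 ≤ y ⬝ᵥ (designMatrix lam x n)⁻¹ *ᵥ y := by
  simpa using (posDef_designMatrix hlam n).inv.posSemidef.dotProduct_mulVec_nonneg y

theorem log_det_designMatrix (hlam : 0 < lam) (n : ℕ) :
    Real.log (designMatrix lam x n).det = Fintype.card ι * Real.log lam +
      ∑ s ∈ Finset.Icc 1 n, Real.log (1 + x s ⬝ᵥ (designMatrix lam x (s - 1))⁻¹ *ᵥ x s) := by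
  induction n with
  | zero => simp [designMatrix_zero]
  | succ n ih =>
    have hdet := (posDef_designMatrix (x := x) hlam n).det_pos
    have hquad := dotProduct_inv_designMatrix_nonneg (x := x) hlam n (x (n + 1))
    rw [designMatrix_succ, det_add_vecMulVec hdet.ne'.isUnit,
      Real.log_mul hdet.ne' (by positivity), ih, Finset.sum_Icc_succ_top (by lia),
      Nat.add_sub_cancel, add_assoc]

variable {L : ℝ} {n : ℕ}

theorem log_det_designMatrix_le [Nonempty ι] (hlam : 0 < lam)
    (hx : ∀ s ∈ Finset.Icc 1 n, x s ⬝ᵥ x s ≤ L ^ 2) :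
    Real.log (designMatrix lam x n).det ≤ Fintype.card ι * Real.log lam +
      Fintype.card ι * Real.log (1 + n * L ^ 2 / (Fintype.card ι * lam)) := by
  have hfactor : 0 < 1 + n * L ^ 2 / (Fintype.card ι * lam) := by positivity
  have htrace : (designMatrix lam x n).trace ≤
      Fintype.card ι * (lam * (1 + n * L ^ 2 / (Fintype.card ι * lam))) :=
    calc _ = Fintype.card ι * lam + ∑ s ∈ Finset.Icc 1 n, x s ⬝ᵥ x s := trace_designMatrix n
      _ ≤ Fintype.card ι * lam + n * L ^ 2 := by
        gcongr
        simpa using Finset.sum_le_card_nsmul _ _ _ hx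
      _ = _ := by field_simp
  rw [← mul_add, ← Real.log_mul hlam.ne' hfactor.ne']
  exact log_det_le_card_mul_log (posDef_designMatrix hlam n) (by positivity) htrace

theorem elliptical_potential_le [Nonempty ι] (hlam : 0 < lam) (hL : L ^ 2 ≤ 2 * lam)
    (hx : ∀ s ∈ Finset.Icc 1 n, x s ⬝ᵥ x s ≤ L ^ 2) :
    ∑ s ∈ Finset.Icc 1 n, x s ⬝ᵥ (designMatrix lam x (s - 1))⁻¹ *ᵥ x s ≤
      2 * (Fintype.card ι * Real.log (1 + n * L ^ 2 / (Fintype.card ι * lam))) := by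
  have hquad_le_two : ∀ s ∈ Finset.Icc 1 n,
      x s ⬝ᵥ (designMatrix lam x (s - 1))⁻¹ *ᵥ x s ≤ 2 := fun s hs => by
    have hmul := mul_dotProduct_inv_mulVec_le hlam (smul_one_le_designMatrix (x := x) (s - 1)) (x s)
    exact le_of_mul_le_mul_left (by linarith [hx s hs]) hlam
  calc _ ≤ ∑ s ∈ Finset.Icc 1 n,
          2 * Real.log (1 + x s ⬝ᵥ (designMatrix lam x (s - 1))⁻¹ *ᵥ x s) :=
        Finset.sum_le_sum fun s hs => le_two_mul_log_one_add
          (dotProduct_inv_designMatrix_nonneg hlam _ _) (hquad_le_two s hs)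
    _ = 2 * (Real.log (designMatrix lam x n).det - Fintype.card ι * Real.log lam) := by
        rw [log_det_designMatrix hlam, add_sub_cancel_left, Finset.mul_sum]
    _ ≤ _ := by linarith [log_det_designMatrix_le hlam hx]

end DesignMatrix

theorem sum_wNorm_inv_designMatrix_le {d : ℕ} (hd : 1 ≤ d) {lam L : ℝ} (hlam : 0 < lam)
    (hL : L ^ 2 ≤ 2 * lam) {n : ℕ} {x : ℕ → Fin d → ℝ}
    (hx : ∀ s ∈ Finset.Icc 1 n, eucNorm (x s) ≤ L) :
    ∑ s ∈ Finset.Icc 1 n, wNorm (designMatrix lam x (s - 1))⁻¹ (x s) ≤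
      Real.sqrt (2 * n * d * Real.log (1 + n * L ^ 2 / (d * lam))) := by
  have : NeZero d := ⟨by lia⟩
  have hpotential := elliptical_potential_le hlam hL fun s hs => (Real.sqrt_le_iff.mp (hx s hs)).2
  rw [Fintype.card_fin] at hpotential
  have hsq (s : ℕ) : wNorm (designMatrix lam x (s - 1))⁻¹ (x s) ^ 2 =
      x s ⬝ᵥ (designMatrix lam x (s - 1))⁻¹ *ᵥ x s :=
    Real.sq_sqrt (dotProduct_inv_designMatrix_nonneg hlam _ _)
  apply Real.le_sqrt_of_sq_le
  calc _ ≤ n * ∑ s ∈ Finset.Icc 1 n, wNorm (designMatrix lam x (s - 1))⁻¹ (x s) ^ 2 := by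
        simpa using sq_sum_le_card_mul_sum_sq (s := Finset.Icc 1 n)
          (f := fun s => wNorm (designMatrix lam x (s - 1))⁻¹ (x s))
    _ ≤ n * (2 * (d * Real.log (1 + n * L ^ 2 / (d * lam)))) := by
        simp only [hsq]
        gcongr
    _ = _ := by ring

theorem stmt_17_general {d : ℕ} (hd : 1 ≤ d) {L lam β : ℝ} (hlam : 0 < lam)
    (hL : L ^ 2 ≤ 2 * lam) (hβ : 0 ≤ β) {S : ℕ} {x : ℕ → Fin d → ℝ}
    (hx : ∀ s, 1 ≤ s → s ≤ S → eucNorm (x s) ≤ L) {V : ℕ → Matrix (Fin d) (Fin d) ℝ}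
    (hV0 : V 0 = lam • (1 : Matrix (Fin d) (Fin d) ℝ))
    (hVk : ∀ s, V (s + 1) = V s + vecMulVec (x (s + 1)) (x (s + 1)))
    {w : ℕ → ℝ} {W : ℝ} (hw_nonneg : ∀ s, 1 ≤ s → s ≤ S → 0 ≤ w s)
    (hwW : ∀ s, 1 ≤ s → s ≤ S → w s ≤ W) {ρ : ℕ → ℝ}
    (hρ : ∀ s, 1 ≤ s → s ≤ S → ρ s ≤ 2 * β * wNorm (V (s - 1))⁻¹ (x s)) :
    ∑ s ∈ Finset.Icc 1 S, w s * ρ s ≤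
      W * (2 * β) * Real.sqrt (2 * S * d * Real.log (1 + S * L ^ 2 / (d * lam))) := by
  obtain rfl : V = designMatrix lam x := eq_designMatrix hV0 hVk
  rcases S.eq_zero_or_pos with rfl | hS
  · simp
  have hW : 0 ≤ W := (hw_nonneg 1 le_rfl hS).trans (hwW 1 le_rfl hS)
  have hsum := sum_wNorm_inv_designMatrix_le hd hlam hL fun s hs =>
    hx s (Finset.mem_Icc.mp hs).1 (Finset.mem_Icc.mp hs).2
  calc _ ≤ ∑ s ∈ Finset.Icc 1 S, W * (2 * β) * wNorm (designMatrix lam x (s - 1))⁻¹ (x s) := by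
        refine Finset.sum_le_sum fun s hs => ?_
        obtain ⟨h1s, hsS⟩ := Finset.mem_Icc.mp hs
        have hnorm : 0 ≤ wNorm (designMatrix lam x (s - 1))⁻¹ (x s) := Real.sqrt_nonneg _
        calc w s * ρ s ≤ w s * (2 * β * wNorm (designMatrix lam x (s - 1))⁻¹ (x s)) :=
              mul_le_mul_of_nonneg_left (hρ s h1s hsS) (hw_nonneg s h1s hsS)
          _ ≤ W * (2 * β * wNorm (designMatrix lam x (s - 1))⁻¹ (x s)) :=
              mul_le_mul_of_nonneg_right (hwW s h1s hsS) (by positivity)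
          _ = _ := (mul_assoc ..).symm
    _ ≤ _ := by
        rw [← Finset.mul_sum]
        gcongr

/-- deterministic core of Theorem 2 of the paper. With
communication lengths `q s = ⌈log (2 N s) / √(2 log (1/λ₂))⌉`, actions `x_s` with
`‖x_s‖₂ ≤ L`, design matrices `V_0 = λI`, `V_s = V_{s-1} + x_s x_sᵀ`, and
instantaneous regrets `0 ≤ ρ_s ≤ 2 β ‖x_s‖_{V_{s-1}⁻¹}`, if `S ≤ T` then the
communication-weighted regret satisfies
`∑_{s=1}^S (1 + q s) ρ_s ≤ (1 + ⌈log (2 N T)/√(2 log (1/λ₂))⌉) 2 β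
  √(2 S d log (1 + S L²/(d λ)))`. -/
theorem stmt_17 {d : ℕ} (hd : 1 ≤ d) (N : ℕ) (hN : 1 ≤ N) (lam2 : ℝ)
    (hlam2_pos : 0 < lam2) (hlam2_lt : lam2 < 1)
    (L lam β : ℝ) (hL : 0 < L) (hlam : max 1 (L ^ 2) ≤ lam) (hβ : 0 ≤ β)
    (q : ℕ → ℕ)
    (hq : ∀ s : ℕ, q s = ⌈Real.log (2 * N * s) / Real.sqrt (2 * Real.log (1 / lam2))⌉₊)
    (S T : ℕ) (hST : S ≤ T)
    (x : ℕ → Fin d → ℝ) (hx : ∀ s, 1 ≤ s → s ≤ S → eucNorm (x s) ≤ L)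
    (V : ℕ → Matrix (Fin d) (Fin d) ℝ)
    (hV0 : V 0 = lam • (1 : Matrix (Fin d) (Fin d) ℝ))
    (hVk : ∀ s, V (s + 1) = V s + Matrix.vecMulVec (x (s + 1)) (x (s + 1)))
    (ρ : ℕ → ℝ) (hρ_nonneg : ∀ s, 1 ≤ s → s ≤ S → 0 ≤ ρ s)
    (hρ : ∀ s, 1 ≤ s → s ≤ S → ρ s ≤ 2 * β * wNorm (V (s - 1))⁻¹ (x s)) :
    (∑ s ∈ Finset.Icc 1 S, ((1 + q s : ℕ) : ℝ) * ρ s) ≤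
      (1 + (⌈Real.log (2 * N * T) / Real.sqrt (2 * Real.log (1 / lam2))⌉₊ : ℝ)) *
        (2 * β) * Real.sqrt (2 * S * d * Real.log (1 + S * L ^ 2 / (d * lam))) := by
  obtain rfl : q = communicationLength N lam2 := funext hq
  have hlength : ∀ s, 1 ≤ s → s ≤ S → ((1 + communicationLength N lam2 s : ℕ) : ℝ) ≤
      1 + (communicationLength N lam2 T : ℝ) := fun s _ hsS =>
    mod_cast Nat.add_le_add_left (communicationLength_mono N lam2 (hsS.trans hST)) 1
  obtain ⟨hlam_one, hlam_sq⟩ := max_le_iff.mp hlam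
  exact stmt_17_general hd (by linarith) (by linarith) hβ hx hV0 hVk
    (fun s _ _ => Nat.cast_nonneg _) hlength hρ
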